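/- arXiv:2409.09215 — 3 statements merged into one kernel-verified Lean document; each statement's English description precedes it below -/
import Mathlib

section
/- For every 0 < κ < 1 and every u ≥ 0 one has θ_κ(u) ≤ 1. (Part of Lemma 1; equivalently, 1 − θ_κ(u) = (c₁(κ)/c₂(κ))·K_{(κ−1)/2}(u)·u^{(1−κ)/2} ≥ 0 since K_{(κ−1)/2} is nonnegative.) -/
open Real MeasureTheory Filter

noncomputable def c1 (k : ℝ) : ℝ := (2:ℝ) ^ ((1 - k)/2) / (Real.sqrt π * Real.Gamma (k/2))

noncomputable def c2 (k : ℝ) : ℝ := 1 / (2 * Real.Gamma k * Real.cos (k * π / 2))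

/-- Modified Bessel function of the second kind:
`K ν z = (1/2) ∫₀^∞ s^(ν−1) exp(−(z/2)(s + 1/s)) ds`. -/
noncomputable def besselK (ν z : ℝ) : ℝ :=
  (1/2) * ∫ s in Set.Ioi (0:ℝ), s ^ (ν - 1) * Real.exp (-(z/2) * (s + 1/s))

/-- The function `θ_κ(u)` from Lemma 1. -/
noncomputable def theta (k u : ℝ) : ℝ :=
  Real.Gamma ((k+1)/2) *
    ((2:ℝ)^(k-1) * u^(1-k) / Real.Gamma ((3-k)/2)
      + ∑' m : ℕ, (u/2) ^ (2*((m:ℝ)+1) - k + 1) /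
          ((Nat.factorial (m+1)) * Real.Gamma (((m:ℝ)+1) + (3-k)/2))
      - ∑' m : ℕ, (u/2) ^ (2*((m:ℝ)+1)) /
          ((Nat.factorial (m+1)) * Real.Gamma (((m:ℝ)+1) + (k+1)/2)))

/-!
Up to a positive constant factor, `1 - θ_κ(u)` is `u ^ v K_v(u)` with `v = (1 - κ) / 2`, and `K_v`
is the integral of a positive function. The identity is the connection formula expressing `K_v`
through `I_{-v} - I_v`. For `0 < v < 1` the functions `z ^ v I_{-v}(z)`, `z ^ v I_v(z)` and
`z ^ v K_v(z)` solve one second-order linear equation in `y = (z / 2) ^ 2`, so their pairwise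
Wronskians are determined by the behaviour at `y = 0`, where `K_v` contributes Gamma integrals, and
Euler's reflection formula turns the constants into a sine. Differentiating the formula in `y`
lowers the order by one and `v ↦ -v` is a symmetry, so it holds for every real order.
-/

open Set
open scoped Nat Topology

/-- The Bessel–Clifford function `∑ yᵐ / (m! Γ(m + 1 + c))`, i.e. the regularized `₀F₁(; c + 1; y)`;
in terms of the modified Bessel function of the first kind,
`I_c(z) = (z / 2) ^ c * besselClifford c ((z / 2) ^ 2)`. Terms at poles of `Γ` vanish because
Mathlib sets `Γ = 0` there, which agrees with the entire function `1 / Γ`. -/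
noncomputable def besselClifford (c y : ℝ) : ℝ :=
  ∑' m : ℕ, y ^ m / (m ! * Gamma (m + 1 + c))

lemma inv_Gamma_eq_self_mul_inv_Gamma_add_one (s : ℝ) : (Gamma s)⁻¹ = s * (Gamma (s + 1))⁻¹ := by
  rcases eq_or_ne s 0 with rfl | hs
  · simp
  · rw [Gamma_add_one hs, mul_inv, mul_inv_cancel_left₀ hs]

lemma summable_besselClifford (c y : ℝ) :
    Summable fun m : ℕ => y ^ m / (m ! * Gamma (m + 1 + c)) := by
  have one_le_Gamma : ∀ᶠ m : ℕ in atTop, 1 ≤ Gamma (m + 1 + c) := by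
    filter_upwards [tendsto_natCast_atTop_atTop.eventually_ge_atTop (1 - c)] with m hm
    have two_le : 2 ≤ m + 1 + c := by linarith
    exact Gamma_two.ge.trans (Gamma_strictMonoOn_Ici.monotoneOn self_mem_Ici two_le two_le)
  refine .of_norm_bounded_eventually_nat (summable_pow_div_factorial |y|) ?_
  filter_upwards [one_le_Gamma] with m hm
  rw [norm_div, norm_pow, norm_eq_abs, norm_of_nonneg (by positivity)]
  gcongr
  exact le_mul_of_one_le_right (by positivity) hm

lemma besselClifford_zero_right (c : ℝ) : besselClifford c 0 = (Gamma (1 + c))⁻¹ := by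
  rw [besselClifford, tsum_eq_single 0 fun m hm => by simp [hm]]
  simp

lemma hasSum_besselClifford_add_one (c y : ℝ) :
    HasSum (fun m : ℕ => m * y ^ (m - 1) / (m ! * Gamma (m + 1 + c)))
      (besselClifford (c + 1) y) := by
  rw [← hasSum_nat_add_iff' 1]
  simp only [Finset.sum_range_one, Nat.cast_zero, zero_mul, zero_div, sub_zero]
  refine (summable_besselClifford (c + 1) y).hasSum.congr_fun fun m => ?_
  rw [Nat.factorial_succ, show ((m + 1 : ℕ) : ℝ) + 1 + c = m + 1 + (c + 1) by push_cast; ring,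
    Nat.add_sub_cancel, Nat.cast_mul, mul_assoc, mul_div_mul_left _ _ (by positivity)]

lemma hasDerivAt_besselClifford (c y : ℝ) :
    HasDerivAt (besselClifford c) (besselClifford (c + 1) y) y := by
  have mem_ball : ∀ {z : ℝ}, z ∈ Metric.ball (0 : ℝ) (|y| + 1) ↔ |z| < |y| + 1 := by simp
  rw [← (hasSum_besselClifford_add_one c y).tsum_eq]
  refine hasDerivAt_tsum_of_isPreconnected (hasSum_besselClifford_add_one c (|y| + 1)).summable.norm
    Metric.isOpen_ball (convex_ball 0 (|y| + 1)).isPreconnected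
    (fun m z _ => (hasDerivAt_pow m z).div_const _) (fun m z hz => ?_)
    (mem_ball.2 (lt_add_one _)) (summable_besselClifford c y) (mem_ball.2 (lt_add_one _))
  have hz : |z| ≤ |(|y| + 1)| := (mem_ball.1 hz).le.trans (le_abs_self _)
  simp only [norm_div, norm_mul, norm_pow, norm_eq_abs]
  gcongr

lemma besselClifford_sub_one (c y : ℝ) :
    besselClifford (c - 1) y = c * besselClifford c y + y * besselClifford (c + 1) y := by
  refine (((summable_besselClifford c y).hasSum.mul_left c).add
    ((hasSum_besselClifford_add_one c y).mul_left y)).tsum_eq ▸ tsum_congr fun m => ?_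
  have inv_Gamma := inv_Gamma_eq_self_mul_inv_Gamma_add_one (m + c)
  have pow_pred : (m : ℝ) * (y * y ^ (m - 1)) = m * y ^ m := by
    rcases m with _ | m
    · simp
    · rw [Nat.add_sub_cancel, pow_succ']
  rw [show (m : ℝ) + 1 + (c - 1) = m + c by ring, show (m : ℝ) + 1 + c = m + c + 1 by ring]
  simp only [div_eq_mul_inv, mul_inv, inv_Gamma]
  linear_combination -(m ! : ℝ)⁻¹ * (Gamma (m + c + 1))⁻¹ * pow_pred

lemma hasDerivAt_rpow_mul_besselClifford (c : ℝ) {y : ℝ} (hy : 0 < y) :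
    HasDerivAt (fun y => y ^ c * besselClifford c y)
      (y ^ (c - 1) * besselClifford (c - 1) y) y := by
  convert! (hasDerivAt_rpow_const (p := c) (.inl hy.ne')).mul
    (hasDerivAt_besselClifford c y) using 1
  rw [besselClifford_sub_one, rpow_sub_one hy.ne']
  field_simp

/-- The extended Gamma function of Chaudhry and Zubair, which is `Γ(v)` at `y = 0`. It is the
modified Bessel function of the second kind in the variable natural for `besselClifford`:
`extendedGamma v ((z / 2) ^ 2) = 2 * (z / 2) ^ v * besselK v z`. -/
noncomputable def extendedGamma (v y : ℝ) : ℝ :=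
  ∫ s in Ioi 0, s ^ (v - 1) * exp (-s - y / s)

lemma extendedGamma_nonneg (v y : ℝ) : 0 ≤ extendedGamma v y :=
  setIntegral_nonneg measurableSet_Ioi fun s hs => by
    have : 0 < s := hs
    positivity

lemma continuousOn_extendedGamma_integrand (v y : ℝ) :
    ContinuousOn (fun s : ℝ => s ^ (v - 1) * exp (-s - y / s)) (Ioi 0) := fun s hs => by
  have hs : s ≠ 0 := ne_of_gt hs
  fun_prop (disch := simp [hs])

lemma exp_neg_div_le {y s : ℝ} (hy : 0 < y) (hs : 0 < s) (n : ℕ) :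
    exp (-(y / s)) ≤ n ! * (s / y) ^ n := by
  calc exp (-(y / s)) = (exp (y / s))⁻¹ := exp_neg _
    _ ≤ ((y / s) ^ n / n !)⁻¹ :=
        inv_anti₀ (by positivity) (pow_div_factorial_le_exp _ (by positivity) n)
    _ = n ! * (s / y) ^ n := by rw [inv_div, ← inv_div y s, inv_pow, div_eq_mul_inv]

lemma integrableOn_extendedGamma_integrand (v : ℝ) {y : ℝ} (hy : 0 < y) :
    IntegrableOn (fun s : ℝ => s ^ (v - 1) * exp (-s - y / s)) (Ioi 0) := by
  obtain ⟨n, hn⟩ := exists_nat_gt (-v)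
  refine ((GammaIntegral_convergent (neg_lt_iff_pos_add'.1 hn)).const_mul (n ! / y ^ n)).mono'
    ((continuousOn_extendedGamma_integrand v y).aestronglyMeasurable measurableSet_Ioi) ?_
  filter_upwards [self_mem_ae_restrict measurableSet_Ioi] with s (hs : 0 < s)
  rw [norm_of_nonneg (by positivity)]
  calc s ^ (v - 1) * exp (-s - y / s) = s ^ (v - 1) * exp (-s) * exp (-(y / s)) := by
        rw [sub_eq_add_neg (-s), exp_add, mul_assoc]
    _ ≤ s ^ (v - 1) * exp (-s) * (n ! * (s / y) ^ n) := by
        gcongr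
        exact exp_neg_div_le hy hs n
    _ = n ! / y ^ n * (exp (-s) * s ^ (v + n - 1)) := by
        rw [show v + n - 1 = v - 1 + n by ring, rpow_add hs, rpow_natCast, div_pow]
        ring

lemma hasDerivAt_extendedGamma (v : ℝ) {y : ℝ} (hy : 0 < y) :
    HasDerivAt (extendedGamma v) (-extendedGamma (v - 1) y) y := by
  have measurable : ∀ w z : ℝ, AEStronglyMeasurable
      (fun s : ℝ => s ^ (w - 1) * exp (-s - z / s)) (volume.restrict (Ioi 0)) := fun w z =>
    (continuousOn_extendedGamma_integrand w z).aestronglyMeasurable measurableSet_Ioi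
  rw [extendedGamma, ← integral_neg]
  refine (hasDerivAt_integral_of_dominated_loc_of_deriv_le (Ioi_mem_nhds (half_lt_self hy))
    (.of_forall (measurable v)) (integrableOn_extendedGamma_integrand v hy)
    (F' := fun z s => -(s ^ (v - 1 - 1) * exp (-s - z / s))) (measurable (v - 1) y).neg ?_
    (integrableOn_extendedGamma_integrand (v - 1) (half_pos hy)) ?_).2
  · filter_upwards [self_mem_ae_restrict measurableSet_Ioi] with s (hs : 0 < s) z (hz : y / 2 < z)
    rw [norm_neg, norm_of_nonneg (by positivity)]
    gcongr
  · filter_upwards [self_mem_ae_restrict measurableSet_Ioi] with s (hs : 0 < s) z _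
    convert! ((((hasDerivAt_id z).div_const s).const_sub (-s)).exp.const_mul (s ^ (v - 1))) using 1
    rw [rpow_sub_one hs.ne' (v - 1)]
    simp only [id]
    ring

lemma extendedGamma_neg (v : ℝ) {y : ℝ} (hy : 0 < y) :
    extendedGamma (-v) y = y ^ (-v) * extendedGamma v y := by
  have scaling := integral_comp_mul_left_Ioi' (fun s => s ^ (-v - 1) * exp (-s - y / s)) 0 hy
  have inversion := integral_comp_rpow_Ioi
    (fun s => s ^ (v - 1) * exp (-s - y / s)) (neg_ne_zero.2 one_ne_zero)
  rw [mul_zero, ← integral_smul] at scaling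
  rw [extendedGamma, extendedGamma, ← scaling, ← inversion, ← integral_const_mul]
  refine setIntegral_congr_fun measurableSet_Ioi fun s (hs : 0 < s) => ?_
  have exponent : -(y * s) - y / (y * s) = -s⁻¹ - y / s⁻¹ := by field_simp; ring
  have power : y * (y * s) ^ (-v - 1) = y ^ (-v) * (s ^ (-1 - 1 : ℝ) * s⁻¹ ^ (v - 1)) := by
    rw [mul_rpow hy.le hs.le, inv_rpow hs.le, ← rpow_neg hs.le, ← rpow_add hs,
      rpow_sub_one hy.ne', ← mul_assoc, mul_div_cancel₀ _ hy.ne']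
    ring_nf
  simp only [smul_eq_mul, rpow_neg_one, abs_neg, abs_one, one_mul, exponent]
  rw [← mul_assoc, power]
  ring

lemma tendsto_extendedGamma_zero {v : ℝ} (hv : 0 < v) :
    Tendsto (extendedGamma v) (𝓝[>] 0) (𝓝 (Gamma v)) := by
  rw [Gamma_eq_integral hv]
  refine tendsto_integral_filter_of_dominated_convergence (fun s => exp (-s) * s ^ (v - 1))
    (.of_forall fun y => (continuousOn_extendedGamma_integrand v y).aestronglyMeasurable
      measurableSet_Ioi) ?_ (GammaIntegral_convergent hv) ?_
  · filter_upwards [self_mem_nhdsWithin] with y (hy : 0 < y)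
    filter_upwards [self_mem_ae_restrict measurableSet_Ioi] with s (hs : 0 < s)
    rw [norm_of_nonneg (by positivity), mul_comm]
    gcongr
    exact sub_le_self _ (by positivity)
  · filter_upwards with s
    refine tendsto_nhdsWithin_of_tendsto_nhds ?_
    have : Continuous fun y : ℝ => s ^ (v - 1) * exp (-s - y / s) := by fun_prop
    simpa [mul_comm] using this.tendsto 0

/-- The modified Bessel equation of order `v` in the variable `y = (z / 2) ^ 2`, that is
`y f'' + (1 - v) f' = f` on `y > 0`, written as a first-order system for `f` and
`p = y ^ (1 - v) f'`, together with the values `a` and `b` of `f` and `p` at `0+`. -/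
structure IsBesselSolution (v : ℝ) (f p : ℝ → ℝ) (a b : ℝ) : Prop where
  hasDerivAt_fst : ∀ {y}, 0 < y → HasDerivAt f (y ^ (v - 1) * p y) y
  hasDerivAt_snd : ∀ {y}, 0 < y → HasDerivAt p (y ^ (-v) * f y) y
  tendsto_fst : Tendsto f (𝓝[>] 0) (𝓝 a)
  tendsto_snd : Tendsto p (𝓝[>] 0) (𝓝 b)

namespace IsBesselSolution

variable {v a b a' b' : ℝ} {f p g q : ℝ → ℝ}

lemma swap (h : IsBesselSolution v f p a b) : IsBesselSolution (1 - v) p f b a where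
  hasDerivAt_fst hy := by simpa using h.hasDerivAt_snd hy
  hasDerivAt_snd hy := by simpa using h.hasDerivAt_fst hy
  tendsto_fst := h.tendsto_snd
  tendsto_snd := h.tendsto_fst

lemma wronskian_eq (hf : IsBesselSolution v f p a b) (hg : IsBesselSolution v g q a' b')
    {y : ℝ} (hy : 0 < y) : f y * q y - g y * p y = a * b' - a' * b := by
  have hasDerivAt_zero : ∀ z ∈ Ioi (0 : ℝ), HasDerivAt (fun z => f z * q z - g z * p z) 0 z :=
    fun z hz => (((hf.hasDerivAt_fst hz).mul (hg.hasDerivAt_snd hz)).sub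
      ((hg.hasDerivAt_fst hz).mul (hf.hasDerivAt_snd hz))).congr_deriv (by ring)
  have eq_const : ∀ z ∈ Ioi (0 : ℝ), f y * q y - g y * p y = f z * q z - g z * p z := fun z hz =>
    isOpen_Ioi.is_const_of_deriv_eq_zero isPreconnected_Ioi
      (fun z hz => (hasDerivAt_zero z hz).differentiableAt.differentiableWithinAt)
      (fun z hz => (hasDerivAt_zero z hz).deriv) hy hz
  exact tendsto_nhds_unique
    (tendsto_const_nhds.congr' (eventually_mem_nhdsWithin.mono eq_const))
    ((hf.tendsto_fst.mul hg.tendsto_snd).sub (hg.tendsto_fst.mul hf.tendsto_snd))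

end IsBesselSolution

lemma isBesselSolution_besselClifford {v : ℝ} (hv : v < 1) :
    IsBesselSolution v (besselClifford (-v)) (fun y => y ^ (1 - v) * besselClifford (1 - v) y)
      (Gamma (1 - v))⁻¹ 0 where
  hasDerivAt_fst {y} hy := by
    rw [← mul_assoc, ← rpow_add hy, show v - 1 + (1 - v) = 0 by ring, rpow_zero, one_mul,
      sub_eq_neg_add]
    exact hasDerivAt_besselClifford (-v) y
  hasDerivAt_snd hy := by
    simpa using hasDerivAt_rpow_mul_besselClifford (1 - v) hy
  tendsto_fst := by
    rw [sub_eq_add_neg, ← besselClifford_zero_right]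
    exact tendsto_nhdsWithin_of_tendsto_nhds (hasDerivAt_besselClifford (-v) 0).continuousAt
  tendsto_snd := by
    have hv' : 0 < 1 - v := sub_pos.2 hv
    have := (continuousAt_rpow_const 0 _ (.inr hv'.le)).mul
      (hasDerivAt_besselClifford (1 - v) 0).continuousAt
    simpa [zero_rpow hv'.ne'] using! tendsto_nhdsWithin_of_tendsto_nhds this.tendsto

lemma isBesselSolution_extendedGamma {v : ℝ} (hv₀ : 0 < v) (hv₁ : v < 1) :
    IsBesselSolution v (extendedGamma v) (fun y => -extendedGamma (1 - v) y)
      (Gamma v) (-Gamma (1 - v)) where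
  hasDerivAt_fst {y} hy := by
    refine (hasDerivAt_extendedGamma v hy).congr_deriv ?_
    rw [← neg_sub 1 v, extendedGamma_neg (1 - v) hy, mul_neg]
  hasDerivAt_snd {y} hy := by
    refine (hasDerivAt_extendedGamma (1 - v) hy).neg.congr_deriv ?_
    rw [neg_neg, sub_sub_cancel_left, extendedGamma_neg v hy]
  tendsto_fst := tendsto_extendedGamma_zero hv₀
  tendsto_snd := (tendsto_extendedGamma_zero (sub_pos.2 hv₁)).neg

/-- The connection formula `K_v = (π / 2) (I_{-v} - I_v) / sin (π v)`, cleared of the denominator,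
as a property of the order `v`. -/
def BesselConnection (v : ℝ) : Prop :=
  ∀ ⦃y : ℝ⦄, 0 < y →
    besselClifford (-v) y - y ^ v * besselClifford v y = sin (π * v) / π * extendedGamma v y

lemma sin_pi_mul_div_pi (v : ℝ) : sin (π * v) / π = (Gamma v * Gamma (1 - v))⁻¹ := by
  rw [Gamma_mul_Gamma_one_sub, inv_div]

lemma besselConnection_of_mem_Ioo {v : ℝ} (hv : v ∈ Ioo 0 1) : BesselConnection v := fun y hy => by
  have solI := isBesselSolution_besselClifford hv.2
  have solJ := (isBesselSolution_besselClifford (sub_lt_self 1 hv.1)).swap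
  have solG := isBesselSolution_extendedGamma hv.1 hv.2
  simp only [sub_sub_cancel, neg_sub] at solJ
  have wronskianIJ := solI.wronskian_eq solJ hy
  have wronskianIG := solI.wronskian_eq solG hy
  have wronskianJG := solJ.wronskian_eq solG hy
  have Gamma_v := inv_mul_cancel₀ (Gamma_pos_of_pos hv.1).ne'
  have Gamma_one_sub_v := inv_mul_cancel₀ (Gamma_pos_of_pos (sub_pos.2 hv.2)).ne'
  rw [sin_pi_mul_div_pi, mul_inv]
  -- Cramer's rule: the three Wronskians are the minors of the linear relation between
  -- the three solutions.
  linear_combination besselClifford (-v) y * wronskianJG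
    - y ^ v * besselClifford v y * wronskianIG + extendedGamma v y * wronskianIJ
    - besselClifford (-v) y * Gamma_v + y ^ v * besselClifford v y * Gamma_one_sub_v

lemma besselConnection_zero : BesselConnection 0 := fun y _ => by simp

lemma BesselConnection.neg {v : ℝ} (h : BesselConnection v) : BesselConnection (-v) :=
  fun y hy => by
    have inv_cancel : y ^ (-v) * y ^ v = 1 := by rw [← rpow_add hy, neg_add_cancel, rpow_zero]
    rw [extendedGamma_neg v hy, mul_neg, sin_neg, neg_neg]
    linear_combination -y ^ (-v) * h hy - besselClifford v y * inv_cancel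

lemma BesselConnection.sub_one {v : ℝ} (h : BesselConnection v) : BesselConnection (v - 1) :=
  fun y hy => by
    have deriv_lhs := (hasDerivAt_besselClifford (-v) y).sub
      (hasDerivAt_rpow_mul_besselClifford v hy)
    have deriv_rhs := (hasDerivAt_extendedGamma v hy).const_mul (sin (π * v) / π)
    have eq_near : _ =ᶠ[𝓝 y] _ := eventually_of_mem (Ioi_mem_nhds hy) fun z hz => h hz
    rw [neg_sub, mul_sub, mul_one, sin_sub_pi, sub_eq_neg_add 1 v,
      deriv_lhs.unique (deriv_rhs.congr_of_eventuallyEq eq_near)]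
    ring

lemma BesselConnection.sub_natCast {v : ℝ} (h : BesselConnection v) (n : ℕ) :
    BesselConnection (v - n) := by
  induction n with
  | zero => simpa
  | succ n ih => simpa [sub_sub] using ih.sub_one

lemma besselConnection_of_nonpos {v : ℝ} (hv : v ≤ 0) : BesselConnection v := by
  obtain ⟨n, hn⟩ := Int.eq_ofNat_of_zero_le (neg_nonneg.2 (Int.floor_nonpos hv))
  have fract_sub : v = Int.fract v - n := by
    rw [← Int.self_sub_floor, ← Int.cast_natCast, ← hn]
    push_cast
    ring
  have connection_fract : BesselConnection (Int.fract v) := by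
    rcases (Int.fract_nonneg v).eq_or_lt with h₀ | h₀
    · exact h₀ ▸ besselConnection_zero
    · exact besselConnection_of_mem_Ioo ⟨h₀, Int.fract_lt_one v⟩
  exact fract_sub ▸ connection_fract.sub_natCast n

theorem besselConnection (v : ℝ) : BesselConnection v := by
  rcases le_total v 0 with hv | hv
  · exact besselConnection_of_nonpos hv
  · simpa using (besselConnection_of_nonpos (neg_nonpos.2 hv)).neg

lemma tsum_rpow_div_eq_besselClifford (k u : ℝ) :
    ∑' m : ℕ, (u / 2) ^ (2 * ((m : ℝ) + 1)) / ((m + 1)! * Gamma ((m : ℝ) + 1 + (k + 1) / 2)) =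
      besselClifford (-((1 - k) / 2)) ((u / 2) ^ 2) - (Gamma ((k + 1) / 2))⁻¹ := by
  rw [besselClifford, (summable_besselClifford _ _).tsum_eq_zero_add,
    show ((0 : ℕ) : ℝ) + 1 + -((1 - k) / 2) = (k + 1) / 2 by push_cast; ring]
  simp only [pow_zero, Nat.factorial_zero, Nat.cast_one, one_mul, one_div, add_sub_cancel_left]
  refine tsum_congr fun m => ?_
  rw [← pow_mul, ← rpow_natCast]
  push_cast
  ring_nf

lemma add_tsum_rpow_div_eq_rpow_mul_besselClifford {k u : ℝ} (hk : k ≤ 1) (hu : 0 ≤ u) :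
    2 ^ (k - 1) * u ^ (1 - k) / Gamma ((3 - k) / 2)
      + ∑' m : ℕ, (u / 2) ^ (2 * ((m : ℝ) + 1) - k + 1) /
          ((m + 1)! * Gamma ((m : ℝ) + 1 + (3 - k) / 2)) =
      ((u / 2) ^ 2) ^ ((1 - k) / 2) * besselClifford ((1 - k) / 2) ((u / 2) ^ 2) := by
  have rpow_sq : ((u / 2) ^ 2) ^ ((1 - k) / 2) = (u / 2) ^ (1 - k) := by
    rw [← rpow_natCast, ← rpow_mul (by positivity)]
    push_cast
    ring_nf
  rw [besselClifford, (summable_besselClifford _ _).tsum_eq_zero_add, mul_add, ← tsum_mul_left,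
    rpow_sq]
  congr 1
  · rw [div_rpow hu zero_le_two, ← neg_sub 1 k, rpow_neg zero_le_two,
      show ((0 : ℕ) : ℝ) + 1 + (1 - k) / 2 = (3 - k) / 2 by push_cast; ring]
    simp only [pow_zero, Nat.factorial_zero, Nat.cast_one, one_mul]
    ring
  · refine tsum_congr fun m => ?_
    rw [show 2 * ((m : ℝ) + 1) - k + 1 = (1 - k) + ((2 * (m + 1) : ℕ) : ℝ) by push_cast; ring,
      rpow_add_of_nonneg (by positivity) (sub_nonneg.2 hk) (Nat.cast_nonneg _), rpow_natCast,
      pow_mul, mul_div_assoc,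
      show (m : ℝ) + 1 + (3 - k) / 2 = ((m + 1 : ℕ) : ℝ) + 1 + (1 - k) / 2 by push_cast; ring]

lemma theta_eq_besselClifford {k u : ℝ} (hk : k ≤ 1) (hu : 0 ≤ u) :
    theta k u = Gamma ((k + 1) / 2) *
      (((u / 2) ^ 2) ^ ((1 - k) / 2) * besselClifford ((1 - k) / 2) ((u / 2) ^ 2)
        - (besselClifford (-((1 - k) / 2)) ((u / 2) ^ 2) - (Gamma ((k + 1) / 2))⁻¹)) := by
  rw [theta, add_tsum_rpow_div_eq_rpow_mul_besselClifford hk hu, tsum_rpow_div_eq_besselClifford]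

lemma one_sub_theta {k u : ℝ} (hk : k < 1) (hpole : ∀ n : ℕ, k ≠ -(2 * n + 1)) (hu : 0 < u) :
    1 - theta k u = extendedGamma ((1 - k) / 2) ((u / 2) ^ 2) / Gamma ((1 - k) / 2) := by
  have Gamma_ne_zero : Gamma ((k + 1) / 2) ≠ 0 :=
    Gamma_ne_zero fun n h => hpole n (by linarith)
  have connection := besselConnection ((1 - k) / 2) (y := (u / 2) ^ 2) (by positivity)
  calc 1 - theta k u
      = Gamma ((k + 1) / 2) * (sin (π * ((1 - k) / 2)) / π
          * extendedGamma ((1 - k) / 2) ((u / 2) ^ 2)) := by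
        rw [theta_eq_besselClifford hk.le hu.le, ← connection]
        linear_combination -mul_inv_cancel₀ Gamma_ne_zero
    _ = extendedGamma ((1 - k) / 2) ((u / 2) ^ 2) / Gamma ((1 - k) / 2) := by
        rw [sin_pi_mul_div_pi, show 1 - (1 - k) / 2 = (k + 1) / 2 by ring]
        field_simp

lemma theta_zero_right {k : ℝ} (hk : k < 1) : theta k 0 = 0 := by
  have shifted_exponent_ne_zero : ∀ m : ℕ, 2 * ((m : ℝ) + 1) - k + 1 ≠ 0 := fun m => by
    have : (0 : ℝ) ≤ m := m.cast_nonneg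
    linarith
  have even_exponent_ne_zero : ∀ m : ℕ, 2 * ((m : ℝ) + 1) ≠ 0 := fun m => by positivity
  simp [theta, zero_rpow, sub_ne_zero.2 hk.ne', shifted_exponent_ne_zero, even_exponent_ne_zero]

theorem lemma1_theta_le_one_general {k u : ℝ} (hk : k < 1) (hpole : ∀ n : ℕ, k ≠ -(2 * n + 1))
    (hu : 0 ≤ u) : theta k u ≤ 1 := by
  rcases hu.eq_or_lt with rfl | hu
  · exact (theta_zero_right hk).trans_le zero_le_one
  · have Gamma_pos : 0 < Gamma ((1 - k) / 2) := Gamma_pos_of_pos (by linarith)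
    rw [← sub_nonneg, one_sub_theta hk hpole hu]
    exact div_nonneg (extendedGamma_nonneg _ _) Gamma_pos.le

theorem lemma1_theta_le_one (k : ℝ) (hk0 : 0 < k) (hk1 : k < 1) (u : ℝ) (hu : 0 ≤ u) :
    theta k u ≤ 1 :=
  lemma1_theta_le_one_general hk1 (fun n => by have : (0 : ℝ) ≤ n := n.cast_nonneg; linarith) hu
end

section
/- Let 0 < κ < 1, w ≠ 0, μ > 0 and t > 0. Then lim_{ε→0⁺} ∫_ℝ e^{−2μtλ²}·f_{κ,w}(λ√ε) dλ = f_{κ,w}(0)·√(π/(2μt)). (The key dominated-convergence identity (20) in the proof of Theorem 3, established by splitting the integration domain at |λ√ε| = ε^{1/2−δ} with δ ∈ (0,1/2).) -/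
open Real MeasureTheory Filter

/-- The spectral density `f_{κ,w}` of the covariance `cos(wx)/(1+x²)^{κ/2}`. -/
noncomputable def specDen (k w lam : ℝ) : ℝ :=
  (c1 k / 2) * (besselK ((k-1)/2) |lam + w| * |lam + w| ^ ((k-1)/2)
    + besselK ((k-1)/2) |lam - w| * |lam - w| ^ ((k-1)/2))

/-!
The substitution `u = zs` in the integral defining `K_ν(z)` turns `z^ν K_ν(z)` into a mixture of
Gaussians, `z^ν K_ν(z) = ½ ∫₀^∞ u^(ν-1) exp(-u/2) exp(-z²/(2u)) du`. By Tonelli, its integral over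
`z ∈ ℝ` is a multiple of `∫₀^∞ u^(ν-1/2) exp(-u/2) du`, which is finite for `ν > -1/2`, and for
`z ≠ 0` the factor `exp(-z²/(2u))` suppresses the singularity at `u = 0` locally uniformly in `z`.
Hence the spectral density is integrable and is continuous away from `±w`. The rescaled Gaussians
`ε^(-1/2) exp(-2μtλ²/ε)` are, up to a constant factor, an approximate identity as `ε → 0⁺`, so
integrating against them recovers the value of the density at `0`.
-/

section ApproximateIdentity

open Topology Bornology Module

variable {E : Type*} [NormedAddCommGroup E] [NormedSpace ℝ E] [CompleteSpace E]

lemma tendsto_integral_smul_comp_smul {F : Type*} [NormedAddCommGroup F] [NormedSpace ℝ F]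
    [FiniteDimensional ℝ F] [MeasurableSpace F] [BorelSpace F] {m : Measure F} [m.IsAddHaarMeasure]
    {φ : F → ℝ} (hφ_nonneg : ∀ x, 0 ≤ φ x) (hφ_integral : ∫ x, φ x ∂m = 1)
    (hφ_decay : Tendsto (fun x ↦ ‖x‖ ^ finrank ℝ F * φ x) (cobounded F) (𝓝 0))
    {g : F → E} (hg : Integrable g m) (hg₀ : ContinuousAt g 0) :
    Tendsto (fun δ : ℝ ↦ ∫ x, φ x • g (δ • x) ∂m) (𝓝[>] 0) (𝓝 (g 0)) := by
  have peak := (tendsto_integral_comp_smul_smul_of_integrable hφ_nonneg hφ_integral hφ_decay hg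
    hg₀).comp tendsto_inv_nhdsGT_zero
  refine peak.congr' ?_
  filter_upwards [self_mem_nhdsWithin] with δ (hδ : 0 < δ)
  have rescale := Measure.integral_comp_smul_of_nonneg m (fun x ↦ φ (δ⁻¹ • x) • g x) δ
    (hR := hδ.le)
  simp only [inv_smul_smul₀ hδ.ne'] at rescale
  simp only [Function.comp_apply, mul_smul, integral_smul, rescale, inv_pow]

lemma tendsto_integral_exp_neg_mul_sq_norm_smul_comp_smul {V : Type*} [NormedAddCommGroup V]
    [InnerProductSpace ℝ V] [FiniteDimensional ℝ V] [MeasurableSpace V] [BorelSpace V]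
    {a : ℝ} (ha : 0 < a) {g : V → E} (hg : Integrable g) (hg₀ : ContinuousAt g 0) :
    Tendsto (fun δ : ℝ ↦ ∫ x, exp (-a * ‖x‖ ^ 2) • g (δ • x)) (𝓝[>] 0)
      (𝓝 ((π / a) ^ (finrank ℝ V / 2 : ℝ) • g 0)) := by
  set C := (π / a) ^ (finrank ℝ V / 2 : ℝ)
  have hC : 0 < C := by positivity
  have integral_eq_one : ∫ x : V, C⁻¹ * exp (-a * ‖x‖ ^ 2) = 1 := by
    rw [integral_const_mul, GaussianFourier.integral_rexp_neg_mul_sq_norm ha,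
      inv_mul_cancel₀ hC.ne']
  have decay : Tendsto (fun x : V ↦ ‖x‖ ^ finrank ℝ V * (C⁻¹ * exp (-a * ‖x‖ ^ 2)))
      (cobounded V) (𝓝 0) := by
    have := ((tendsto_rpow_abs_mul_exp_neg_mul_sq_cocompact ha (finrank ℝ V)).mono_left
      atTop_le_cocompact).comp (tendsto_norm_cobounded_atTop (E := V))
    simpa [Function.comp_def, mul_left_comm] using this.const_mul C⁻¹
  have := (tendsto_integral_smul_comp_smul (fun x ↦ by positivity) integral_eq_one decay hg
    hg₀).const_smul C
  simpa only [mul_smul, integral_smul, smul_inv_smul₀ hC.ne'] using this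

end ApproximateIdentity

lemma integrableOn_rpow_mul_exp_neg_mul_sub_div (ν : ℝ) {a b : ℝ} (ha : 0 < a) (hb : 0 < b) :
    IntegrableOn (fun u ↦ u ^ ν * exp (-a * u - b / u)) (Set.Ioi 0) := by
  obtain ⟨n, hn⟩ := exists_nat_gt (-1 - ν)
  have gamma : IntegrableOn (fun u ↦ u ^ (ν + n) * exp (-a * u)) (Set.Ioi 0) := by
    simpa only [rpow_one] using integrableOn_rpow_mul_exp_neg_mul_rpow (p := 1)
      (by linarith : -1 < ν + n) one_pos ha
  refine (gamma.const_mul (n.factorial / b ^ n)).mono' (by fun_prop) ?_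
  filter_upwards [ae_restrict_mem measurableSet_Ioi] with u (hu : 0 < u)
  have exp_neg_div_le : exp (-(b / u)) ≤ n.factorial / b ^ n * u ^ n := by
    rw [exp_neg]
    refine (inv_anti₀ (by positivity)
      (pow_div_factorial_le_exp (x := b / u) (by positivity) n)).trans_eq ?_
    rw [div_pow]
    field_simp
  calc ‖u ^ ν * exp (-a * u - b / u)‖
      = u ^ ν * exp (-a * u) * exp (-(b / u)) := by
        rw [norm_of_nonneg (by positivity), sub_eq_add_neg, exp_add, mul_assoc]
    _ ≤ u ^ ν * exp (-a * u) * (n.factorial / b ^ n * u ^ n) := by gcongr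
    _ = n.factorial / b ^ n * (u ^ (ν + n) * exp (-a * u)) := by
        rw [rpow_add_natCast hu.ne']
        ring

/-- The mixture of centred Gaussians `x ↦ exp (-x² / (2u))` of variance `u`, with mixing weight
`u ^ (ν - 1) * exp (-u / 2) / 2`. It agrees with `|x| ^ ν * K_ν(|x|)` for `x ≠ 0`, and is used to
read off the integrability and continuity of that function. -/
noncomputable def gaussianMixture (ν x : ℝ) : ℝ :=
  1 / 2 * ∫ u in Set.Ioi (0 : ℝ), u ^ (ν - 1) * exp (-(1 / 2) * u - x ^ 2 / 2 / u)

lemma besselK_mul_rpow (ν : ℝ) {z : ℝ} (hz : 0 < z) :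
    besselK ν z * z ^ ν = gaussianMixture ν z := by
  let g : ℝ → ℝ := fun u ↦ u ^ (ν - 1) * exp (-(1 / 2) * u - z ^ 2 / 2 / u)
  have substitution : ∫ u in Set.Ioi 0, g u = ∫ s in Set.Ioi 0, z * g (z * s) := by
    rw [integral_const_mul, ← smul_eq_mul, integral_comp_mul_left_Ioi' g 0 hz, mul_zero]
  rw [besselK, gaussianMixture, substitution, mul_assoc, ← integral_mul_const]
  congr 1
  refine setIntegral_congr_fun measurableSet_Ioi fun s (hs : 0 < s) ↦ ?_
  have exponent : -(1 / 2) * (z * s) - z ^ 2 / 2 / (z * s) = -(z / 2) * (s + 1 / s) := by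
    field_simp
    ring
  have power : z * (z * s) ^ (ν - 1) = s ^ (ν - 1) * z ^ ν := by
    rw [mul_rpow hz.le hs.le, rpow_sub_one hz.ne']
    field_simp
  simp only [g]
  rw [exponent, ← mul_assoc, power, mul_right_comm]

lemma besselK_abs_mul_rpow (ν : ℝ) {x : ℝ} (hx : x ≠ 0) :
    besselK ν |x| * |x| ^ ν = gaussianMixture ν x := by
  rw [besselK_mul_rpow ν (abs_pos.2 hx), gaussianMixture, gaussianMixture, sq_abs]

lemma continuousAt_gaussianMixture (ν : ℝ) {x : ℝ} (hx : x ≠ 0) :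
    ContinuousAt (gaussianMixture ν) x := by
  refine continuousAt_const.mul (continuousAt_of_dominated
    (bound := fun u ↦ u ^ (ν - 1) * exp (-(1 / 2) * u - x ^ 2 / 4 / u))
    (.of_forall fun y ↦ by fun_prop) ?_
    (integrableOn_rpow_mul_exp_neg_mul_sub_div _ one_half_pos (by positivity))
    (.of_forall fun u ↦ by fun_prop))
  have half_sq_lt : ∀ᶠ y in nhds x, x ^ 2 / 2 < y ^ 2 :=
    (continuous_pow 2).continuousAt.eventually_const_lt (half_lt_self (by positivity))
  filter_upwards [half_sq_lt] with y hy
  filter_upwards [ae_restrict_mem measurableSet_Ioi] with u (hu : 0 < u)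
  rw [norm_of_nonneg (by positivity)]
  gcongr _ * exp (_ - ?_ / _)
  linarith

lemma integrable_gaussianMixture {ν : ℝ} (hν : -1 / 2 < ν) : Integrable (gaussianMixture ν) := by
  let F : ℝ × ℝ → ℝ := fun p ↦ p.2 ^ (ν - 1) * exp (-(1 / 2) * p.2 - p.1 ^ 2 / 2 / p.2)
  have F_eq (x u : ℝ) : F (x, u) =
      u ^ (ν - 1) * exp (-(1 / 2) * u) * exp (-(1 / (2 * u)) * x ^ 2) := by
    rw [mul_assoc, ← exp_add]
    simp only [F]
    ring_nf
  have F_nonneg (x : ℝ) {u : ℝ} (hu : 0 < u) : 0 ≤ F (x, u) := by positivity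
  have integral_F {u : ℝ} (hu : 0 < u) :
      ∫ x, ‖F (x, u)‖ = √(2 * π) * (u ^ (ν - 1 / 2) * exp (-(1 / 2) * u)) := by
    simp_rw [norm_of_nonneg (F_nonneg _ hu)]
    simp only [F_eq, integral_const_mul, integral_gaussian]
    rw [show ν - 1 / 2 = ν - 1 + 1 / 2 by ring, rpow_add hu, ← sqrt_eq_rpow,
      show π / (1 / (2 * u)) = 2 * π * u by field_simp, sqrt_mul (by positivity)]
    ring
  have gamma : IntegrableOn (fun u ↦ u ^ (ν - 1 / 2) * exp (-(1 / 2) * u)) (Set.Ioi 0) := by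
    simpa only [rpow_one] using integrableOn_rpow_mul_exp_neg_mul_rpow (p := 1)
      (by linarith : -1 < ν - 1 / 2) one_pos one_half_pos
  have F_integrable : Integrable F (volume.prod (volume.restrict (Set.Ioi 0))) := by
    refine (integrable_prod_iff' (by fun_prop)).2 ⟨?_, ?_⟩
    · filter_upwards [ae_restrict_mem measurableSet_Ioi] with u (hu : 0 < u)
      simp only [F_eq]
      exact (integrable_exp_neg_mul_sq (by positivity)).const_mul _
    · exact IntegrableOn.congr_fun (gamma.const_mul _) (fun u hu ↦ (integral_F hu).symm)
        measurableSet_Ioi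
  exact F_integrable.integral_prod_left.const_mul _

lemma specDen_eq_gaussianMixture (k : ℝ) {w x : ℝ} (hadd : x + w ≠ 0) (hsub : x - w ≠ 0) :
    specDen k w x = c1 k / 2 *
      (gaussianMixture ((k - 1) / 2) (x + w) + gaussianMixture ((k - 1) / 2) (x - w)) := by
  rw [specDen, besselK_abs_mul_rpow _ hadd, besselK_abs_mul_rpow _ hsub]

lemma integrable_specDen {k : ℝ} (hk : 0 < k) (w : ℝ) : Integrable (specDen k w) := by
  have mixture := integrable_gaussianMixture (ν := (k - 1) / 2) (by linarith)
  refine (((mixture.comp_add_right w).add (mixture.comp_sub_right w)).const_mul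
    (c1 k / 2)).congr ?_
  filter_upwards [Measure.ae_ne volume (-w), Measure.ae_ne volume w] with x hadd hsub
  exact (specDen_eq_gaussianMixture k (mt eq_neg_of_add_eq_zero_left hadd)
    (sub_ne_zero.2 hsub)).symm

lemma continuousAt_specDen (k : ℝ) {w x : ℝ} (hadd : x + w ≠ 0) (hsub : x - w ≠ 0) :
    ContinuousAt (specDen k w) x := by
  have mixture : ContinuousAt (fun y ↦ c1 k / 2 *
      (gaussianMixture ((k - 1) / 2) (y + w) + gaussianMixture ((k - 1) / 2) (y - w))) x :=
    continuousAt_const.mul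
      (((continuousAt_gaussianMixture _ hadd).comp' (f := (· + w)) (by fun_prop)).add
        ((continuousAt_gaussianMixture _ hsub).comp' (f := (· - w)) (by fun_prop)))
  refine mixture.congr ?_
  filter_upwards [(continuous_add_const w).continuousAt.eventually_ne hadd,
    (continuous_id.sub continuous_const).continuousAt.eventually_ne hsub] with y hy_add hy_sub
  exact (specDen_eq_gaussianMixture k hy_add hy_sub).symm

theorem heat_dominated_convergence_general {k w μ t : ℝ}
    (hk : 0 < k) (hw : w ≠ 0) (hμ : 0 < μ) (ht : 0 < t) :
    Tendsto (fun ε ↦ ∫ lam, exp (-2 * μ * t * lam ^ 2) * specDen k w (lam * √ε))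
      (nhdsWithin 0 (Set.Ioi 0)) (nhds (specDen k w 0 * √(π / (2 * μ * t)))) := by
  have ha : 0 < 2 * μ * t := by positivity
  have continuousAt_zero : ContinuousAt (specDen k w) 0 :=
    continuousAt_specDen k (by simpa using hw) (by simpa using hw)
  have sqrt_tendsto : Tendsto sqrt (nhdsWithin 0 (Set.Ioi 0)) (nhdsWithin 0 (Set.Ioi 0)) := by
    simpa using continuous_sqrt.continuousWithinAt.tendsto_nhdsWithin
      (x := 0) (s := Set.Ioi 0) (t := Set.Ioi 0) fun ε hε ↦ sqrt_pos.2 hε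
  have limit := (tendsto_integral_exp_neg_mul_sq_norm_smul_comp_smul ha
    (integrable_specDen hk w) continuousAt_zero).comp sqrt_tendsto
  simpa [Function.comp_def, sqrt_eq_rpow, mul_comm, mul_left_comm] using limit

theorem heat_dominated_convergence (k w μ t : ℝ)
    (hk0 : 0 < k) (hk1 : k < 1) (hw : w ≠ 0) (hμ : 0 < μ) (ht : 0 < t) :
    Filter.Tendsto
      (fun ε : ℝ => ∫ lam : ℝ, Real.exp (-2*μ*t*lam^2) * specDen k w (lam * Real.sqrt ε))
      (nhdsWithin 0 (Set.Ioi 0))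
      (nhds (specDen k w 0 * Real.sqrt (π / (2*μ*t)))) :=
  heat_dominated_convergence_general hk0 hw hμ ht
end

section
/- Let 0 < κ < 1, w ≠ 0, μ > 0, t > 0, t' > 0 and x, x' ∈ ℝ. Then f_{κ,w}(0)·∫_ℝ cos(λ(x−x'))·e^{−μ(t+t')λ²} dλ = (c₂(κ)·√π·(1−θ_κ(|w|))/(√μ·|w|^{1−κ})) · e^{−(x−x')²/(4μ(t+t'))}/√(t+t'). (The covariance formula (16) of Theorem 3 for the limit Gaussian field U₀(t,x), combining the Gaussian integral ∫_ℝ cos(λδ)e^{−aλ²}dλ = √(π/a)·e^{−δ²/(4a)} with the Lemma 1 identity f_{κ,w}(0) = c₂(κ)(1−θ_κ(|w|))/|w|^{1−κ}.) -/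
open Real MeasureTheory Filter

/-!
With `ν = (κ - 1) / 2` the identity `f_{κ,w}(0) = c₂(κ) (1 - θ_κ(|w|)) / |w|^{1-κ}` is, up to Gamma
function identities, the connection formula `K_ν = π (I_{-ν} - I_ν) / (2 sin νπ)`. In terms of the
Bessel–Clifford functions `C_ν` and `𝒦_ν`, which are `I_ν` and `K_ν` stripped of a power of the
argument, it reads `𝒦_ν(y) = π (y^{-ν} C_{-ν}(y) - C_ν(y)) / (2 sin νπ)`. For `-1 < ν < 0` three
Wronskians are constant, their values can be read off at `y = 0⁺`, and together they determine
`𝒦_ν`. Differentiation turns the formula for `ν` into the one for `ν + 1`, and `𝒦_{-ν} = y^ν 𝒦_ν`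
turns it into the one for `-ν`; this reaches every non-integer `ν`. The dependence on space and time
is the Fourier transform of a Gaussian.
-/

open scoped Topology

section GaussianIntegral

theorem integral_cos_mul_exp_neg_mul_sq {b : ℝ} (hb : 0 < b) (d : ℝ) :
    ∫ x : ℝ, Real.cos (x * d) * Real.exp (-b * x ^ 2) =
      Real.sqrt (π / b) * Real.exp (-d ^ 2 / (4 * b)) := by
  have hb' : (-(b : ℂ)).re < 0 := by simpa using hb
  have h_re (x : ℝ) : Real.cos (x * d) * Real.exp (-b * x ^ 2) =
      (Complex.exp (-(b : ℂ) * x ^ 2 + Complex.I * d * x + 0)).re := by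
    rw [show -(b : ℂ) * x ^ 2 + Complex.I * d * x + 0 =
        ((-b * x ^ 2 : ℝ) : ℂ) + ((x * d : ℝ) : ℂ) * Complex.I by push_cast; ring,
      Complex.exp_add, ← Complex.ofReal_exp, Complex.re_ofReal_mul,
      Complex.exp_ofReal_mul_I_re, mul_comm]
  have h_sqrt : ((π : ℂ) / - -(b : ℂ)) ^ (1 / 2 : ℂ) = (Real.sqrt (π / b) : ℝ) := by
    rw [Real.sqrt_eq_rpow, Complex.ofReal_cpow (by positivity)]
    push_cast
    rw [neg_neg]
  have h_exp : (0 : ℂ) - (Complex.I * d) ^ 2 / (4 * -(b : ℂ)) = (-d ^ 2 / (4 * b) : ℝ) := by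
    rw [mul_pow, Complex.I_sq]
    push_cast
    ring
  have h_int := integral_re (integrable_cexp_quadratic' hb' (Complex.I * d) 0)
  simp only [RCLike.re_to_complex] at h_int
  simp_rw [h_re]
  rw [h_int, integral_cexp_quadratic hb', h_sqrt, h_exp, ← Complex.ofReal_exp,
    ← Complex.ofReal_mul, Complex.ofReal_re]

end GaussianIntegral

section RealAnalysis

theorem eq_of_hasDerivAt_zero_of_tendsto_nhdsGT {E : Type*} [NormedAddCommGroup E]
    [NormedSpace ℝ E] {f : ℝ → E} {L : E} {a : ℝ} (hf : ∀ y, a < y → HasDerivAt f 0 y)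
    (hL : Tendsto f (𝓝[>] a) (𝓝 L)) {y : ℝ} (hy : a < y) : f y = L := by
  have h_const : ∀ x ∈ Set.Ioi a, f y = f x := fun x hx =>
    isOpen_Ioi.is_const_of_deriv_eq_zero isPreconnected_Ioi
      (fun z hz => (hf z hz).differentiableAt.differentiableWithinAt)
      (fun z hz => (hf z hz).deriv) hy hx
  refine tendsto_nhds_unique (tendsto_const_nhds.congr' ?_) hL
  filter_upwards [self_mem_nhdsWithin] with x hx using h_const x hx

theorem exp_neg_div_le_factorial_mul_pow {y s : ℝ} (hy : 0 < y) (hs : 0 < s) (n : ℕ) :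
    Real.exp (-(y / s)) ≤ n.factorial * (s / y) ^ n := by
  rw [Real.exp_neg, inv_le_comm₀ (Real.exp_pos _) (by positivity)]
  calc (n.factorial * (s / y) ^ n)⁻¹ = (y / s) ^ n / n.factorial := by
        rw [mul_inv, ← inv_pow, inv_div, ← div_eq_inv_mul]
    _ ≤ Real.exp (y / s) := Real.pow_div_factorial_le_exp _ (by positivity) n

theorem inv_Gamma_eq_mul_inv_Gamma_add_one (s : ℝ) :
    (Real.Gamma s)⁻¹ = s * (Real.Gamma (s + 1))⁻¹ := by
  rcases eq_or_ne s 0 with rfl | hs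
  · simp
  · rw [Real.Gamma_add_one hs, mul_inv, mul_inv_cancel_left₀ hs]

theorem exists_forall_abs_inv_Gamma_natCast_add_le (c : ℝ) :
    ∃ M : ℝ, ∀ m : ℕ, |(Real.Gamma (m + c))⁻¹| ≤ M := by
  have h_large : ∀ᶠ m : ℕ in atTop, |(Real.Gamma (m + c))⁻¹| ≤ 1 := by
    filter_upwards [(tendsto_atTop_add_const_right _ c
      tendsto_natCast_atTop_atTop).eventually_ge_atTop 2] with m hm
    have h_one : 1 ≤ Real.Gamma (m + c) := by
      simpa only [Real.Gamma_two] using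
        Real.Gamma_strictMonoOn_Ici.monotoneOn (Set.mem_Ici.2 le_rfl) hm hm
    rw [abs_of_pos (by positivity)]
    exact inv_le_one_of_one_le₀ h_one
  obtain ⟨M, hM⟩ := (isBoundedUnder_of_eventually_le h_large).bddAbove_range
  exact ⟨M, fun m => hM ⟨m, rfl⟩⟩

end RealAnalysis

/-- The Bessel–Clifford function of the first kind `C_ν(y) = ∑ yᵐ / (m! Γ(m + ν + 1))`, which is
related to the modified Bessel function by `I_ν(z) = (z/2)^ν C_ν((z/2)²)`. At the poles of `Γ` the
conventions `Γ = 0` and `x / 0 = 0` give `1 / Γ` its correct value `0`. -/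
noncomputable def besselCliffordC (ν y : ℝ) : ℝ :=
  ∑' m : ℕ, y ^ m / (m.factorial * Real.Gamma (m + (ν + 1)))

section besselCliffordC

theorem summable_besselCliffordC (ν y : ℝ) :
    Summable fun m : ℕ => y ^ m / (m.factorial * Real.Gamma (m + (ν + 1))) := by
  obtain ⟨M, hM⟩ := exists_forall_abs_inv_Gamma_natCast_add_le (ν + 1)
  refine Summable.of_norm_bounded ((Real.summable_pow_div_factorial |y|).mul_right M) fun m => ?_
  rw [← div_div, div_eq_mul_inv _ (Real.Gamma _), norm_mul, norm_div, norm_pow,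
    Real.norm_natCast, Real.norm_eq_abs, Real.norm_eq_abs]
  gcongr
  exact hM m

theorem succ_mul_pow_div_factorial_mul_Gamma (ν y : ℝ) (m : ℕ) :
    ((m + 1 : ℕ) : ℝ) * y ^ m / ((m + 1).factorial * Real.Gamma ((m + 1 : ℕ) + (ν + 1))) =
      y ^ m / (m.factorial * Real.Gamma (m + (ν + 1 + 1))) := by
  rw [show ((m + 1 : ℕ) : ℝ) + (ν + 1) = m + (ν + 1 + 1) by push_cast; ring,
    Nat.factorial_succ, Nat.cast_mul, mul_assoc, mul_div_mul_left _ _ (by positivity)]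

theorem hasDerivAt_besselCliffordC (ν y : ℝ) :
    HasDerivAt (besselCliffordC ν) (besselCliffordC (ν + 1) y) y := by
  set R := |y| + 1
  have hy : y ∈ Set.Ioo (-R) R := abs_lt.1 (lt_add_one _)
  let a (m : ℕ) : ℝ := m.factorial * Real.Gamma (m + (ν + 1))
  let u (m : ℕ) : ℝ := |m * R ^ (m - 1) / a m|
  have hu : Summable u := by
    rw [← summable_nat_add_iff 1]
    refine (summable_besselCliffordC (ν + 1) R).abs.congr fun m => ?_
    rw [← succ_mul_pow_div_factorial_mul_Gamma]
    rfl
  have h_bound (m : ℕ) (x : ℝ) (hx : x ∈ Set.Ioo (-R) R) : ‖m * x ^ (m - 1) / a m‖ ≤ u m := by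
    have hxR : |x| ≤ |R| := (abs_lt.2 hx).le.trans (le_abs_self R)
    simp only [u, Real.norm_eq_abs, abs_div, abs_mul, abs_pow]
    gcongr
  have h_deriv := hasDerivAt_tsum_of_isPreconnected hu isOpen_Ioo isPreconnected_Ioo
    (fun m x _ => (hasDerivAt_pow m x).div_const (a m)) h_bound hy
    (summable_besselCliffordC ν y) hy
  refine h_deriv.congr_deriv ?_
  rw [(Summable.of_norm_bounded hu fun m => h_bound m y hy).tsum_eq_zero_add,
    Nat.cast_zero, zero_mul, zero_div, zero_add]
  exact tsum_congr (succ_mul_pow_div_factorial_mul_Gamma ν y)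

theorem hasSum_natCast_mul_besselCliffordC (ν y : ℝ) :
    HasSum (fun m : ℕ => m * (y ^ m / (m.factorial * Real.Gamma (m + (ν + 1)))))
      (y * besselCliffordC (ν + 1) y) := by
  rw [← hasSum_nat_add_iff' 1]
  simp only [Finset.range_one, Finset.sum_singleton, Nat.cast_zero, zero_mul, sub_zero]
  refine ((summable_besselCliffordC (ν + 1) y).hasSum.mul_left y).congr_fun fun m => ?_
  rw [← succ_mul_pow_div_factorial_mul_Gamma, pow_succ]
  ring

theorem besselCliffordC_sub_one (ν y : ℝ) :
    besselCliffordC (ν - 1) y = ν * besselCliffordC ν y + y * besselCliffordC (ν + 1) y := by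
  refine (summable_besselCliffordC (ν - 1) y).hasSum.unique ?_
  refine (((summable_besselCliffordC ν y).hasSum.mul_left ν).add
    (hasSum_natCast_mul_besselCliffordC ν y)).congr_fun fun m => ?_
  simp only [div_eq_mul_inv, mul_inv]
  rw [sub_add_cancel, inv_Gamma_eq_mul_inv_Gamma_add_one (m + ν), add_assoc]
  ring

theorem hasDerivAt_rpow_mul_besselCliffordC (ν : ℝ) {y : ℝ} (hy : 0 < y) :
    HasDerivAt (fun y => y ^ ν * besselCliffordC ν y)
      (y ^ (ν - 1) * besselCliffordC (ν - 1) y) y := by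
  refine ((Real.hasDerivAt_rpow_const (p := ν) (Or.inl hy.ne')).mul
    (hasDerivAt_besselCliffordC ν y)).congr_deriv ?_
  rw [besselCliffordC_sub_one, Real.rpow_sub_one hy.ne']
  field_simp

theorem besselCliffordC_zero_right (ν : ℝ) :
    besselCliffordC ν 0 = (Real.Gamma (ν + 1))⁻¹ := by
  rw [besselCliffordC, tsum_eq_single 0 fun m hm => by rw [zero_pow hm, zero_div]]
  simp

theorem tendsto_besselCliffordC (ν : ℝ) :
    Tendsto (besselCliffordC ν) (𝓝[>] 0) (𝓝 (Real.Gamma (ν + 1))⁻¹) := by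
  rw [← besselCliffordC_zero_right]
  exact (hasDerivAt_besselCliffordC ν 0).continuousAt.tendsto.mono_left nhdsWithin_le_nhds

theorem tendsto_rpow_mul_besselCliffordC {ν : ℝ} (hν : 0 < ν) :
    Tendsto (fun y => y ^ ν * besselCliffordC ν y) (𝓝[>] 0) (𝓝 0) := by
  have h_rpow : Tendsto (fun y : ℝ => y ^ ν) (𝓝[>] 0) (𝓝 0) := by
    simpa only [Real.zero_rpow hν.ne'] using
      (Real.continuousAt_rpow_const 0 ν (Or.inr hν.le)).tendsto.mono_left nhdsWithin_le_nhds
  simpa only [zero_mul] using h_rpow.mul (tendsto_besselCliffordC ν)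

end besselCliffordC

/-- The Bessel–Clifford function of the second kind `𝒦_ν`, which is related to the modified Bessel
function by `K_ν(z) = (z/2)^ν 𝒦_ν((z/2)²)`. The integral converges for `y > 0`, and also for `y = 0`
if `ν < 0`. -/
noncomputable def besselCliffordK (ν y : ℝ) : ℝ :=
  (1 / 2) * ∫ s in Set.Ioi (0 : ℝ), s ^ (-ν - 1) * Real.exp (-s - y / s)

section besselCliffordK

theorem aestronglyMeasurable_besselCliffordK (ν y : ℝ) :
    AEStronglyMeasurable (fun s : ℝ => s ^ (-ν - 1) * Real.exp (-s - y / s))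
      (volume.restrict (Set.Ioi 0)) :=
  Measurable.aestronglyMeasurable (by fun_prop)

theorem integrableOn_besselCliffordK (ν : ℝ) {y : ℝ} (hy : 0 < y) :
    IntegrableOn (fun s : ℝ => s ^ (-ν - 1) * Real.exp (-s - y / s)) (Set.Ioi 0) := by
  obtain ⟨n, hn⟩ := exists_nat_gt ν
  -- `exp (-y / s)` vanishes to every order at `0`, which absorbs the singularity of the power.
  refine Integrable.mono' ((Real.GammaIntegral_convergent (s := n - ν) (by linarith)).const_mul
    (n.factorial / y ^ n)) (aestronglyMeasurable_besselCliffordK ν y) ?_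
  refine ae_restrict_of_forall_mem measurableSet_Ioi fun s (hs : 0 < s) => ?_
  rw [Real.norm_of_nonneg (by positivity)]
  calc s ^ (-ν - 1) * Real.exp (-s - y / s)
      = s ^ (-ν - 1) * (Real.exp (-s) * Real.exp (-(y / s))) := by
        rw [sub_eq_add_neg (-s), Real.exp_add]
    _ ≤ s ^ (-ν - 1) * (Real.exp (-s) * (n.factorial * (s / y) ^ n)) := by
        gcongr
        exact exp_neg_div_le_factorial_mul_pow hy hs n
    _ = n.factorial / y ^ n * (Real.exp (-s) * s ^ (n - ν - 1)) := by
        rw [show (n : ℝ) - ν - 1 = (-ν - 1) + n by ring, Real.rpow_add_natCast hs.ne', div_pow]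
        ring

theorem hasDerivAt_besselCliffordK (ν : ℝ) {y : ℝ} (hy : 0 < y) :
    HasDerivAt (besselCliffordK ν) (-besselCliffordK (ν + 1) y) y := by
  have h_deriv := (hasDerivAt_integral_of_dominated_loc_of_deriv_le
    (μ := volume.restrict (Set.Ioi (0 : ℝ)))
    (F := fun y s => s ^ (-ν - 1) * Real.exp (-s - y / s))
    (F' := fun y s => -(s ^ (-(ν + 1) - 1) * Real.exp (-s - y / s)))
    (bound := fun s => s ^ (-(ν + 1) - 1) * Real.exp (-s - y / 2 / s))
    (Ioi_mem_nhds (half_lt_self hy))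
    (Eventually.of_forall fun x => aestronglyMeasurable_besselCliffordK ν x)
    (integrableOn_besselCliffordK ν hy) (aestronglyMeasurable_besselCliffordK (ν + 1) y).neg
    ?_ (integrableOn_besselCliffordK (ν + 1) (half_pos hy)) ?_).2
  · refine (h_deriv.const_mul (1 / 2)).congr_deriv ?_
    rw [integral_neg, mul_neg, besselCliffordK]
  · refine ae_restrict_of_forall_mem measurableSet_Ioi fun s (hs : 0 < s) x (hx : y / 2 < x) => ?_
    rw [norm_neg, Real.norm_of_nonneg (by positivity)]
    gcongr
  · refine ae_restrict_of_forall_mem measurableSet_Ioi fun s (hs : 0 < s) x _ => ?_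
    have h_exponent : HasDerivAt (fun x : ℝ => -s - x / s) (-(1 / s)) x :=
      ((hasDerivAt_id x).div_const s).const_sub (-s)
    refine (h_exponent.exp.const_mul (s ^ (-ν - 1))).congr_deriv ?_
    rw [show -(ν + 1) - 1 = -ν - 1 - 1 by ring, Real.rpow_sub_one hs.ne' (-ν - 1)]
    ring

theorem tendsto_besselCliffordK {ν : ℝ} (hν : ν < 0) :
    Tendsto (besselCliffordK ν) (𝓝[>] 0) (𝓝 (1 / 2 * Real.Gamma (-ν))) := by
  rw [Real.Gamma_eq_integral (neg_pos.2 hν)]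
  refine (tendsto_integral_filter_of_dominated_convergence
    (fun s => Real.exp (-s) * s ^ (-ν - 1))
    (Eventually.of_forall fun x => aestronglyMeasurable_besselCliffordK ν x) ?_
    (Real.GammaIntegral_convergent (neg_pos.2 hν)) ?_).const_mul (1 / 2)
  · filter_upwards [self_mem_nhdsWithin] with y (hy : 0 < y)
    refine ae_restrict_of_forall_mem measurableSet_Ioi fun s (hs : 0 < s) => ?_
    rw [Real.norm_of_nonneg (by positivity), mul_comm]
    gcongr
    exact sub_le_self _ (by positivity)
  · refine ae_restrict_of_forall_mem measurableSet_Ioi fun s _ => ?_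
    have h_cont : Continuous fun y : ℝ => s ^ (-ν - 1) * Real.exp (-s - y / s) := by fun_prop
    simpa [mul_comm] using (h_cont.tendsto 0).mono_left (nhdsWithin_le_nhds (s := Set.Ioi 0))

end besselCliffordK

section besselK

theorem besselK_neg (ν z : ℝ) : besselK (-ν) z = besselK ν z := by
  rw [besselK, besselK, ← integral_comp_rpow_Ioi (p := -1)
    (fun s : ℝ => s ^ (-ν - 1) * Real.exp (-(z / 2) * (s + 1 / s))) (by norm_num)]
  congr 1
  refine setIntegral_congr_fun measurableSet_Ioi fun s (hs : 0 < s) => ?_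
  have h_power : s ^ (-1 - 1 : ℝ) * (s ^ (-1 : ℝ)) ^ (-ν - 1) = s ^ (ν - 1) := by
    rw [← Real.rpow_mul hs.le, ← Real.rpow_add hs]
    ring_nf
  have h_sum : s ^ (-1 : ℝ) + 1 / s ^ (-1 : ℝ) = s + 1 / s := by
    rw [Real.rpow_neg_one, one_div, inv_inv, one_div, add_comm]
  simp only [smul_eq_mul, abs_neg, abs_one, one_mul]
  rw [← mul_assoc, h_power, h_sum]

theorem besselK_eq_rpow_mul_besselCliffordK (ν : ℝ) {z : ℝ} (hz : 0 < z) :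
    besselK ν z = (z / 2) ^ ν * besselCliffordK ν ((z / 2) ^ 2) := by
  have h_scale := integral_comp_mul_left_Ioi'
    (fun s : ℝ => s ^ (-ν - 1) * Real.exp (-(z / 2) * (s + 1 / s))) 0 (b := (z / 2)⁻¹)
    (by positivity)
  rw [mul_zero] at h_scale
  rw [← besselK_neg, besselK, besselCliffordK, ← h_scale, mul_left_comm, smul_eq_mul]
  congr 1
  rw [← integral_const_mul, ← integral_const_mul]
  refine setIntegral_congr_fun measurableSet_Ioi fun s (hs : 0 < s) => ?_
  have h_power : (z / 2)⁻¹ * ((z / 2)⁻¹ * s) ^ (-ν - 1) = (z / 2) ^ ν * s ^ (-ν - 1) := by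
    rw [Real.mul_rpow (by positivity) hs.le, Real.inv_rpow (by positivity),
      ← Real.rpow_neg (by positivity), show -(-ν - 1) = ν + 1 by ring,
      Real.rpow_add_one (by positivity)]
    field_simp
  have h_exponent :
      -(z / 2) * ((z / 2)⁻¹ * s + 1 / ((z / 2)⁻¹ * s)) = -s - (z / 2) ^ 2 / s := by
    field_simp
    ring
  rw [h_exponent, ← mul_assoc, h_power, mul_assoc]

theorem besselCliffordK_neg (ν : ℝ) {y : ℝ} (hy : 0 < y) :
    besselCliffordK (-ν) y = y ^ ν * besselCliffordK ν y := by
  have h_sqrt : 0 < Real.sqrt y := Real.sqrt_pos.2 hy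
  have h_symm := besselK_neg ν (2 * Real.sqrt y)
  rw [besselK_eq_rpow_mul_besselCliffordK _ (by positivity),
    besselK_eq_rpow_mul_besselCliffordK _ (by positivity), mul_div_cancel_left₀ _ two_ne_zero,
    Real.sq_sqrt hy.le, Real.rpow_neg h_sqrt.le, inv_mul_eq_iff_eq_mul₀ (by positivity)] at h_symm
  rw [h_symm, ← mul_assoc, ← Real.mul_rpow h_sqrt.le h_sqrt.le, Real.mul_self_sqrt hy.le]

end besselK

section ConnectionFormula

variable {ν y : ℝ}

theorem hasDerivAt_besselCliffordK' (ν : ℝ) (hy : 0 < y) :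
    HasDerivAt (besselCliffordK ν) (-(y ^ (-1 - ν) * besselCliffordK (-1 - ν) y)) y := by
  rw [← besselCliffordK_neg _ hy, show -(-1 - ν) = ν + 1 by ring]
  exact hasDerivAt_besselCliffordK ν hy

theorem besselCliffordC_wronskian (hν : -1 < ν) (hν0 : ν < 0) (hy : 0 < y) :
    besselCliffordC ν y * besselCliffordC (-1 - ν) y -
        (y ^ (-ν) * besselCliffordC (-ν) y) * (y ^ (ν + 1) * besselCliffordC (ν + 1) y) =
      (Real.Gamma (ν + 1))⁻¹ * (Real.Gamma (-ν))⁻¹ := by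
  refine eq_of_hasDerivAt_zero_of_tendsto_nhdsGT (f := fun y =>
    besselCliffordC ν y * besselCliffordC (-1 - ν) y -
      (y ^ (-ν) * besselCliffordC (-ν) y) * (y ^ (ν + 1) * besselCliffordC (ν + 1) y))
    (fun y hy => ?_) ?_ hy
  · refine (((hasDerivAt_besselCliffordC ν y).mul (hasDerivAt_besselCliffordC (-1 - ν) y)).sub
      ((hasDerivAt_rpow_mul_besselCliffordC (-ν) hy).mul
        (hasDerivAt_rpow_mul_besselCliffordC (ν + 1) hy))).congr_deriv ?_
    have h₁ : y ^ (-ν) * y ^ ν = 1 := by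
      rw [← Real.rpow_add hy, neg_add_cancel, Real.rpow_zero]
    have h₂ : y ^ (-1 - ν) * y ^ (ν + 1) = 1 := by
      rw [← Real.rpow_add hy, show -1 - ν + (ν + 1) = 0 by ring, Real.rpow_zero]
    rw [show -1 - ν + 1 = -ν by ring, show ν + 1 - 1 = ν by ring, show -ν - 1 = -1 - ν by ring]
    linear_combination (-besselCliffordC (-ν) y * besselCliffordC ν y) * h₁ -
      (besselCliffordC (-1 - ν) y * besselCliffordC (ν + 1) y) * h₂
  · simpa only [show -1 - ν + 1 = -ν by ring, mul_zero, sub_zero] using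
      ((tendsto_besselCliffordC ν).mul (tendsto_besselCliffordC (-1 - ν))).sub
        ((tendsto_rpow_mul_besselCliffordC (neg_pos.2 hν0)).mul
          (tendsto_rpow_mul_besselCliffordC (neg_lt_iff_pos_add.1 hν)))

theorem besselCliffordK_wronskian (hν : -1 < ν) (hν0 : ν < 0) (hy : 0 < y) :
    besselCliffordK ν y * besselCliffordC (-1 - ν) y +
      besselCliffordK (-1 - ν) y * (y ^ (-ν) * besselCliffordC (-ν) y) = 1 / 2 := by
  refine eq_of_hasDerivAt_zero_of_tendsto_nhdsGT (f := fun y =>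
    besselCliffordK ν y * besselCliffordC (-1 - ν) y +
      besselCliffordK (-1 - ν) y * (y ^ (-ν) * besselCliffordC (-ν) y)) (fun y hy => ?_) ?_ hy
  · refine (((hasDerivAt_besselCliffordK' ν hy).mul
      (hasDerivAt_besselCliffordC (-1 - ν) y)).add
        ((hasDerivAt_besselCliffordK' (-1 - ν) hy).mul
          (hasDerivAt_rpow_mul_besselCliffordC (-ν) hy))).congr_deriv ?_
    have h₁ : y ^ ν * y ^ (-ν) = 1 := by
      rw [← Real.rpow_add hy, add_neg_cancel, Real.rpow_zero]
    rw [show -1 - ν + 1 = -ν by ring, show -1 - (-1 - ν) = ν by ring,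
      show -ν - 1 = -1 - ν by ring]
    linear_combination (-besselCliffordK ν y * besselCliffordC (-ν) y) * h₁
  · have h_Gamma : Real.Gamma (-ν) ≠ 0 := (Real.Gamma_pos_of_pos (neg_pos.2 hν0)).ne'
    have h_lim := ((tendsto_besselCliffordK hν0).mul (tendsto_besselCliffordC (-1 - ν))).add
      ((tendsto_besselCliffordK (show -1 - ν < 0 by linarith)).mul
        (tendsto_rpow_mul_besselCliffordC (neg_pos.2 hν0)))
    rwa [show -1 - ν + 1 = -ν by ring, mul_zero, add_zero, mul_inv_cancel_right₀ h_Gamma] at h_lim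

/-- The connection formula `𝒦_ν = π (y^{-ν} C_{-ν} - C_ν) / (2 sin νπ)` on `(0, ∞)`, as a property
of the order `ν` that can be transported from one order to another. -/
def BesselCliffordConnection (ν : ℝ) : Prop :=
  ∀ y : ℝ, 0 < y → besselCliffordK ν y =
    π / (2 * Real.sin (ν * π)) * (y ^ (-ν) * besselCliffordC (-ν) y - besselCliffordC ν y)

namespace BesselCliffordConnection

theorem of_mem_Ioo (hν : ν ∈ Set.Ioo (-1) 0) : BesselCliffordConnection ν := by
  intro y hy
  obtain ⟨hν₁, hν₀⟩ := hν
  have h_CC := besselCliffordC_wronskian hν₁ hν₀ hy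
  have h_KC := besselCliffordK_wronskian hν₁ hν₀ hy
  have h_KC' := besselCliffordK_wronskian (ν := -1 - ν) (by linarith) (by linarith) hy
  rw [show -1 - (-1 - ν) = ν by ring, show -(-1 - ν) = ν + 1 by ring] at h_KC'
  have h_reflection : Real.Gamma (ν + 1) * Real.Gamma (-ν) = -(π / Real.sin (ν * π)) := by
    have h := Real.Gamma_mul_Gamma_one_sub (-ν)
    rwa [show 1 - -ν = ν + 1 by ring, mul_comm, mul_neg, Real.sin_neg, div_neg, mul_comm π] at h
  have hΓ : Real.Gamma (ν + 1) * Real.Gamma (-ν) ≠ 0 :=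
    (mul_pos (Real.Gamma_pos_of_pos (by linarith)) (Real.Gamma_pos_of_pos (by linarith))).ne'
  have h_solved : besselCliffordK ν y * (Real.Gamma (ν + 1) * Real.Gamma (-ν))⁻¹ =
      (besselCliffordC ν y - y ^ (-ν) * besselCliffordC (-ν) y) / 2 := by
    rw [mul_inv]
    linear_combination (-besselCliffordK ν y) * h_CC + besselCliffordC ν y * h_KC -
      (y ^ (-ν) * besselCliffordC (-ν) y) * h_KC'
  rw [mul_inv_eq_iff_eq_mul₀ hΓ, h_reflection] at h_solved
  rw [h_solved]
  ring

theorem neg (h : BesselCliffordConnection ν) : BesselCliffordConnection (-ν) := by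
  intro y hy
  have h_power : y ^ ν * y ^ (-ν) = 1 := by rw [← Real.rpow_add hy, add_neg_cancel, Real.rpow_zero]
  rw [besselCliffordK_neg ν hy, h y hy, neg_neg, neg_mul, Real.sin_neg, mul_neg, div_neg]
  linear_combination π / (2 * Real.sin (ν * π)) * besselCliffordC (-ν) y * h_power

theorem add_one (h : BesselCliffordConnection ν) : BesselCliffordConnection (ν + 1) := by
  intro y hy
  have h_deriv := ((hasDerivAt_rpow_mul_besselCliffordC (-ν) hy).sub
    (hasDerivAt_besselCliffordC ν y)).const_mul (π / (2 * Real.sin (ν * π)))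
  have h_unique := ((hasDerivAt_besselCliffordK ν hy).congr_of_eventuallyEq
    (by filter_upwards [Ioi_mem_nhds hy] with x hx using (h x hx).symm)).unique h_deriv
  rw [← neg_eq_iff_eq_neg.2 h_unique.symm, neg_add', add_mul, one_mul, Real.sin_add_pi, mul_neg,
    div_neg, neg_mul]

theorem sub_one (h : BesselCliffordConnection ν) : BesselCliffordConnection (ν - 1) := by
  simpa only [neg_add, neg_neg, sub_eq_add_neg] using h.neg.add_one.neg

theorem add_intCast (h : BesselCliffordConnection ν) (n : ℤ) :
    BesselCliffordConnection (ν + n) := by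
  induction n with
  | zero => simpa only [Int.cast_zero, add_zero] using h
  | succ n ih => simpa only [Int.cast_add, Int.cast_one, add_assoc] using ih.add_one
  | pred n ih => simpa only [Int.cast_sub, Int.cast_one, add_sub_assoc] using ih.sub_one

theorem of_sin_ne_zero (hν : Real.sin (ν * π) ≠ 0) : BesselCliffordConnection ν := by
  have h_fract : Int.fract ν ≠ 0 := fun h => hν <| by
    rw [← Int.fract_add_floor ν, h, zero_add, Real.sin_int_mul_pi]
  have h_mem : Int.fract ν - 1 ∈ Set.Ioo (-1 : ℝ) 0 :=
    ⟨by linarith [(Int.fract_nonneg ν).lt_of_ne' h_fract], by linarith [Int.fract_lt_one ν]⟩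
  have h := (of_mem_Ioo h_mem).add_intCast (⌊ν⌋ + 1)
  rwa [Int.cast_add, Int.cast_one, sub_add_add_cancel, Int.fract_add_floor] at h

end BesselCliffordConnection

end ConnectionFormula

section SpectralDensity

variable {k w : ℝ}

theorem besselCliffordC_sq (ν v : ℝ) :
    besselCliffordC ν (v ^ 2) = (Real.Gamma (ν + 1))⁻¹ + ∑' m : ℕ, v ^ (2 * ((m : ℝ) + 1)) /
      ((m + 1).factorial * Real.Gamma ((m + 1) + (ν + 1))) := by
  rw [besselCliffordC, (summable_besselCliffordC ν _).tsum_eq_zero_add]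
  congr 1
  · simp
  · refine tsum_congr fun m => ?_
    rw [← pow_mul, ← Real.rpow_natCast]
    push_cast
    rfl

theorem one_sub_theta_s11 {u : ℝ} (hu : 0 < u) (hΓ : Real.Gamma ((k + 1) / 2) ≠ 0) :
    1 - theta k u = Real.Gamma ((k + 1) / 2) * (besselCliffordC ((k - 1) / 2) ((u / 2) ^ 2) -
      (u / 2) ^ (1 - k) * besselCliffordC (-((k - 1) / 2)) ((u / 2) ^ 2)) := by
  have hu2 : 0 < u / 2 := half_pos hu
  have h_term (m : ℕ) : (u / 2) ^ (1 - k) * ((u / 2) ^ (2 * ((m : ℝ) + 1)) /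
        ((m + 1).factorial * Real.Gamma ((m + 1) + (3 - k) / 2))) =
      (u / 2) ^ (2 * ((m : ℝ) + 1) - k + 1) /
        ((m + 1).factorial * Real.Gamma ((m + 1) + (3 - k) / 2)) := by
    rw [← mul_div_assoc, ← Real.rpow_add hu2]
    congr 2
    ring
  have h_lead : (u / 2) ^ (1 - k) = (2 : ℝ) ^ (k - 1) * u ^ (1 - k) := by
    rw [Real.div_rpow hu.le zero_le_two, ← neg_sub 1 k, Real.rpow_neg zero_le_two]
    ring
  rw [besselCliffordC_sq, besselCliffordC_sq, show (k - 1) / 2 + 1 = (k + 1) / 2 by ring,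
    show -((k - 1) / 2) + 1 = (3 - k) / 2 by ring, mul_add, ← tsum_mul_left]
  simp only [h_term]
  rw [h_lead, theta, div_eq_mul_inv _ (Real.Gamma ((3 - k) / 2))]
  linear_combination -mul_inv_cancel₀ hΓ

theorem Gamma_div_two_mul_Gamma_add_one_div_two (k : ℝ) :
    Real.Gamma (k / 2) * Real.Gamma ((k + 1) / 2) =
      Real.Gamma k * 2 ^ (1 - k) * Real.sqrt π := by
  simpa only [← add_div, mul_div_cancel₀ k (two_ne_zero' ℝ)] using
    Real.Gamma_mul_Gamma_add_half (k / 2)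

theorem Gamma_div_two_mul_Gamma_add_one_div_two_ne_zero (hΓ : Real.Gamma k ≠ 0) :
    Real.Gamma (k / 2) * Real.Gamma ((k + 1) / 2) ≠ 0 := by
  rw [Gamma_div_two_mul_Gamma_add_one_div_two]
  positivity

theorem c1_mul_two_rpow_mul_pi_div_two_mul_cos (hΓ : Real.Gamma k ≠ 0) :
    c1 k * (2 : ℝ) ^ ((1 - k) / 2) * (π / (2 * Real.cos (k * π / 2))) =
      c2 k * Real.Gamma ((k + 1) / 2) := by
  have hΓ_half : Real.Gamma (k / 2) ≠ 0 :=
    left_ne_zero_of_mul (Gamma_div_two_mul_Gamma_add_one_div_two_ne_zero hΓ)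
  have h_two : (2 : ℝ) ^ ((1 - k) / 2) * 2 ^ ((1 - k) / 2) = 2 ^ (1 - k) := by
    rw [← Real.rpow_add two_pos, add_halves]
  calc c1 k * (2 : ℝ) ^ ((1 - k) / 2) * (π / (2 * Real.cos (k * π / 2)))
      = 2 ^ (1 - k) * (π / Real.sqrt π) / Real.Gamma (k / 2) / (2 * Real.cos (k * π / 2)) := by
        rw [c1, ← h_two]
        ring
    _ = Real.Gamma k * 2 ^ (1 - k) * Real.sqrt π / Real.Gamma (k / 2) /
          (2 * Real.Gamma k * Real.cos (k * π / 2)) := by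
        rw [Real.div_sqrt]
        field_simp
    _ = c2 k * Real.Gamma ((k + 1) / 2) := by
        rw [c2, ← Gamma_div_two_mul_Gamma_add_one_div_two, mul_div_cancel_left₀ _ hΓ_half]
        ring

theorem Gamma_mul_besselCliffordK_eq_one_sub_theta {u : ℝ} (hu : 0 < u)
    (hΓ : Real.Gamma ((k + 1) / 2) ≠ 0) (hcos : Real.cos (k * π / 2) ≠ 0) :
    Real.Gamma ((k + 1) / 2) * besselCliffordK ((k - 1) / 2) ((u / 2) ^ 2) =
      π / (2 * Real.cos (k * π / 2)) * (1 - theta k u) := by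
  have h_sin : Real.sin ((k - 1) / 2 * π) = -Real.cos (k * π / 2) := by
    rw [← Real.sin_sub_pi_div_two]
    ring_nf
  have h_power : ((u / 2) ^ 2) ^ (-((k - 1) / 2)) = (u / 2) ^ (1 - k) := by
    rw [← Real.rpow_natCast_mul (half_pos hu).le]
    ring_nf
  rw [BesselCliffordConnection.of_sin_ne_zero (h_sin ▸ neg_ne_zero.2 hcos) _ (by positivity),
    h_sin, h_power, one_sub_theta_s11 hu hΓ]
  ring

theorem specDen_zero_right (k w : ℝ) : specDen k w 0 =
    c1 k * (besselK ((k - 1) / 2) |w| * |w| ^ ((k - 1) / 2)) := by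
  rw [specDen, zero_add, zero_sub, abs_neg]
  ring

theorem specDen_zero_right_eq_one_sub_theta (hΓ : Real.Gamma k ≠ 0)
    (hcos : Real.cos (k * π / 2) ≠ 0) (hw : w ≠ 0) :
    specDen k w 0 = c2 k * (1 - theta k |w|) / |w| ^ (1 - k) := by
  have hu : 0 < |w| := abs_pos.2 hw
  have hΓ' : Real.Gamma ((k + 1) / 2) ≠ 0 :=
    right_ne_zero_of_mul (Gamma_div_two_mul_Gamma_add_one_div_two_ne_zero hΓ)
  have h_power : (|w| / 2) ^ ((k - 1) / 2) * |w| ^ ((k - 1) / 2) =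
      2 ^ ((1 - k) / 2) / |w| ^ (1 - k) := by
    rw [Real.div_rpow hu.le zero_le_two, div_mul_eq_mul_div, ← Real.rpow_add hu, add_halves,
      ← neg_sub 1 k, neg_div, Real.rpow_neg hu.le, Real.rpow_neg zero_le_two, div_inv_eq_mul,
      inv_mul_eq_div]
  rw [← mul_right_inj' hΓ', specDen_zero_right, besselK_eq_rpow_mul_besselCliffordK _ hu]
  calc Real.Gamma ((k + 1) / 2) * (c1 k * ((|w| / 2) ^ ((k - 1) / 2) *
          besselCliffordK ((k - 1) / 2) ((|w| / 2) ^ 2) * |w| ^ ((k - 1) / 2)))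
      = c1 k * ((|w| / 2) ^ ((k - 1) / 2) * |w| ^ ((k - 1) / 2)) *
          (Real.Gamma ((k + 1) / 2) * besselCliffordK ((k - 1) / 2) ((|w| / 2) ^ 2)) := by ring
    _ = c1 k * 2 ^ ((1 - k) / 2) * (π / (2 * Real.cos (k * π / 2))) *
          ((1 - theta k |w|) / |w| ^ (1 - k)) := by
        rw [h_power, Gamma_mul_besselCliffordK_eq_one_sub_theta hu hΓ' hcos]
        ring
    _ = Real.Gamma ((k + 1) / 2) * (c2 k * (1 - theta k |w|) / |w| ^ (1 - k)) := by
        rw [c1_mul_two_rpow_mul_pi_div_two_mul_cos hΓ]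
        ring

end SpectralDensity

theorem limit_field_covariance_general (k w μ t t' x x' : ℝ)
    (hΓ : Real.Gamma k ≠ 0) (hcos : Real.cos (k * π / 2) ≠ 0) (hw : w ≠ 0) (hμ : 0 < μ)
    (ht : 0 < t + t') :
    specDen k w 0 * ∫ lam : ℝ, Real.cos (lam * (x - x')) * Real.exp (-μ * (t + t') * lam^2)
      = c2 k * Real.sqrt π * (1 - theta k |w|) / (Real.sqrt μ * |w| ^ (1-k))
          * (Real.exp (-(x - x')^2 / (4 * μ * (t + t'))) / Real.sqrt (t + t')) := by
  have hb : 0 < μ * (t + t') := mul_pos hμ ht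
  rw [neg_mul μ, integral_cos_mul_exp_neg_mul_sq hb, specDen_zero_right_eq_one_sub_theta hΓ hcos
    hw, Real.sqrt_div' _ hb.le, Real.sqrt_mul hμ.le, ← mul_assoc 4]
  ring

theorem limit_field_covariance (k w μ t t' x x' : ℝ)
    (hk0 : 0 < k) (hk1 : k < 1) (hw : w ≠ 0) (hμ : 0 < μ) (ht : 0 < t) (ht' : 0 < t') :
    specDen k w 0 * ∫ lam : ℝ, Real.cos (lam * (x - x')) * Real.exp (-μ * (t + t') * lam^2)
      = c2 k * Real.sqrt π * (1 - theta k |w|) / (Real.sqrt μ * |w| ^ (1-k))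
          * (Real.exp (-(x - x')^2 / (4 * μ * (t + t'))) / Real.sqrt (t + t')) :=
  limit_field_covariance_general k w μ t t' x x' (Real.Gamma_pos_of_pos hk0).ne'
    (Real.cos_pos_of_mem_Ioo ⟨by nlinarith [Real.pi_pos], by nlinarith [Real.pi_pos]⟩).ne'
    hw hμ (add_pos ht ht')
end
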